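/- arXiv:math/0105140 — 2 statements merged into one kernel-verified Lean document; each statement's English description precedes it below -/
import Mathlib

section
/- For every natural number n ≥ 1, the following identity holds in the polynomial ring ℤ[X]: the sum over all partitions P of the set {1,…,n} of (∏_{blocks B of P} (|B| − 1)!) · X^{n − (number of blocks of P)} equals the product ∏_{i=1}^{n−1} (1 + i·X). (This is the paper's computation that the Poincaré polynomial of the n-th component Poiss_d(n) of the d-Poisson operad is (1 + t^{−d})(1 + 2t^{−d})⋯(1 + (n−1)t^{−d}), with X standing for t^{−d}, derived from the decomposition (1.113)–(1.114).) -/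
open Polynomial

namespace PP
variable {α : Type*} [DecidableEq α]

noncomputable def W (m : ℕ) (F : Finset (Finset α)) : ℤ[X] :=
  C ((∏ B ∈ F, (B.card - 1).factorial : ℕ) : ℤ) * X ^ (m - F.card)

def ext {s : Finset α} {a : α} (ha : a ∉ s) (P : Finpartition s) (B : Finset α)
    (hB : B ∈ insert ∅ P.parts) : Finpartition (insert a s) :=
  Finpartition.ofExistsUnique (insert (insert a B) (P.parts.erase B))
    (by
      have hBs : B ⊆ s := by
        rcases Finset.mem_insert.1 hB with rfl | h
        · simp
        · exact P.subset h
      intro p hp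
      rcases Finset.mem_insert.1 hp with rfl | h
      · exact Finset.insert_subset_insert _ hBs
      · exact (P.subset (Finset.mem_of_mem_erase h)).trans (Finset.subset_insert _ _))
    (by
      intro x hx
      by_cases hxa : x = a
      · subst hxa
        refine ⟨insert x B, by simp, ?_⟩
        rintro t ⟨ht, hxt⟩
        rcases Finset.mem_insert.1 ht with rfl | h
        · rfl
        · exact absurd (P.subset (Finset.mem_of_mem_erase h) hxt) ha
      · have hxs : x ∈ s := by simpa [hxa] using hx
        by_cases hxB : x ∈ B
        · have hBP : B ∈ P.parts := by
            rcases Finset.mem_insert.1 hB with rfl | h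
            · simp at hxB
            · exact h
          refine ⟨insert a B, by simp [hxB], ?_⟩
          rintro t ⟨ht, hxt⟩
          rcases Finset.mem_insert.1 ht with rfl | h
          · rfl
          · rw [Finset.mem_erase] at h
            exact absurd (P.eq_of_mem_parts h.2 hBP hxt hxB) h.1
        · obtain ⟨t, ht, hxt⟩ := P.exists_mem hxs
          refine ⟨t, ⟨Finset.mem_insert_of_mem (Finset.mem_erase.2 ⟨?_, ht⟩), hxt⟩, ?_⟩
          · rintro rfl; exact hxB hxt
          · rintro u ⟨hu, hxu⟩
            rcases Finset.mem_insert.1 hu with rfl | h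
            · simp [hxa, hxB] at hxu
            · exact P.eq_of_mem_parts (Finset.mem_of_mem_erase h) ht hxu hxt)
    (by
      intro h
      rcases Finset.mem_insert.1 h with h | h
      · exact (Finset.insert_ne_empty a B) h.symm
      · exact P.empty_notMem_parts (Finset.mem_of_mem_erase h))

lemma ext_parts {s : Finset α} {a : α} (ha : a ∉ s) (P : Finpartition s) (B : Finset α)
    (hB : B ∈ insert ∅ P.parts) :
    (ext ha P B hB).parts = insert (insert a B) (P.parts.erase B) := rfl

def res {s : Finset α} {a : α} (Q : Finpartition (insert a s)) : Finpartition s :=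
  Q.restrict (Finset.subset_insert a s)

lemma mem_res {s : Finset α} {a : α} (Q : Finpartition (insert a s)) (t : Finset α) :
    t ∈ (res Q).parts ↔ t ≠ ∅ ∧ ∃ u ∈ Q.parts, u ∩ s = t := by
  simp [res, Finpartition.restrict]

lemma part_ext {s : Finset α} {a : α} (ha : a ∉ s) (P : Finpartition s) (B : Finset α)
    (hB : B ∈ insert ∅ P.parts) : (ext ha P B hB).part a = insert a B :=
  Finpartition.part_eq_of_mem _ (by simp [ext_parts]) (by simp)

lemma sub_of {s : Finset α} (P : Finpartition s) {B : Finset α}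
    (hB : B ∈ insert ∅ P.parts) : B ⊆ s := by
  rcases Finset.mem_insert.1 hB with rfl | h
  · simp
  · exact P.subset h

lemma res_ext {s : Finset α} {a : α} (ha : a ∉ s) (P : Finpartition s) (B : Finset α)
    (hB : B ∈ insert ∅ P.parts) : res (ext ha P B hB) = P := by
  have hBs := sub_of P hB
  have h1 : insert a B ∩ s = B := by
    rw [Finset.insert_inter_of_notMem ha, Finset.inter_eq_left.2 hBs]
  apply Finpartition.ext
  ext t
  rw [mem_res, ext_parts]
  constructor
  · rintro ⟨ht, u, hu, rfl⟩
    rcases Finset.mem_insert.1 hu with rfl | h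
    · rw [h1] at ht ⊢
      exact (Finset.mem_insert.1 hB).resolve_left ht
    · have := Finset.mem_of_mem_erase h
      rwa [Finset.inter_eq_left.2 (P.subset this)]
  · intro ht
    refine ⟨P.ne_empty ht, ?_⟩
    by_cases h : t = B
    · subst h
      exact ⟨_, Finset.mem_insert_self _ _, h1⟩
    · exact ⟨t, Finset.mem_insert_of_mem (Finset.mem_erase.2 ⟨h, ht⟩),
        Finset.inter_eq_left.2 (P.subset ht)⟩

lemma inter_eq {s : Finset α} {a : α} (ha : a ∉ s) (Q : Finpartition (insert a s)) :
    Q.part a ∩ s = (Q.part a).erase a := by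
  ext x
  have : x ∈ Q.part a → x ∈ insert a s := fun h => Q.part_subset a h
  simp only [Finset.mem_inter, Finset.mem_erase, Finset.mem_insert] at *
  constructor
  · rintro ⟨h1, h2⟩
    exact ⟨fun h => ha (h ▸ h2), h1⟩
  · rintro ⟨h1, h2⟩
    exact ⟨h2, (this h2).resolve_left h1⟩

lemma mem_er {s : Finset α} {a : α} (ha : a ∉ s) (Q : Finpartition (insert a s)) :
    (Q.part a).erase a ∈ insert ∅ (res Q).parts := by
  rw [Finset.mem_insert, mem_res]
  by_cases h : (Q.part a).erase a = ∅
  · exact Or.inl h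
  · exact Or.inr ⟨h, Q.part a, by simp, inter_eq ha Q⟩

lemma ext_res {s : Finset α} {a : α} (ha : a ∉ s) (Q : Finpartition (insert a s)) :
    ext ha (res Q) ((Q.part a).erase a) (mem_er ha Q) = Q := by
  have haT : a ∈ Q.part a := by simp
  have hT : Q.part a ∈ Q.parts := by simp
  have key : ∀ u ∈ Q.parts, u ≠ Q.part a → u ∩ s = u := by
    intro u hu hne
    rw [Finset.inter_eq_left]
    intro x hx
    rcases Finset.mem_insert.1 (Q.subset hu hx) with rfl | h
    · exact absurd (Q.eq_of_mem_parts hu hT hx haT) hne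
    · exact h
  apply Finpartition.ext
  ext t
  rw [ext_parts, Finset.insert_erase haT, Finset.mem_insert, Finset.mem_erase, mem_res]
  constructor
  · rintro (rfl | ⟨h1, h2, u, hu, rfl⟩)
    · exact hT
    · by_cases h : u = Q.part a
      · subst h
        exact absurd (inter_eq ha Q) h1
      · rwa [key u hu h]
  · intro ht
    by_cases h : t = Q.part a
    · exact Or.inl h
    · refine Or.inr ⟨?_, Q.ne_empty ht, t, ht, key t ht h⟩
      rintro h'
      obtain ⟨x, hx⟩ := Q.nonempty_of_mem_parts ht
      have : x ∈ Q.part a := Finset.mem_of_mem_erase (h' ▸ hx)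
      exact h (Q.eq_of_mem_parts ht hT hx this)

lemma step {s : Finset α} {a : α} (ha : a ∉ s) :
    ∑ Q : Finpartition (insert a s), W (insert a s).card Q.parts =
      (∑ P : Finpartition s, W s.card P.parts) * (1 + (s.card : ℤ[X]) * X) := by
  have h1 : ∑ Q : Finpartition (insert a s), W (insert a s).card Q.parts =
      ∑ p ∈ (Finset.univ : Finset (Finpartition s)).sigma (fun P => insert ∅ P.parts),
        W (insert a s).card (insert (insert a p.2) (p.1.parts.erase p.2)) := by
    symm
    refine Finset.sum_bij' (fun p hp => ext ha p.1 p.2 (Finset.mem_sigma.1 hp).2)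
      (fun Q _ => ⟨res Q, (Q.part a).erase a⟩) ?_ ?_ ?_ ?_ ?_
    · intros; simp
    · intro Q _; exact Finset.mem_sigma.2 ⟨Finset.mem_univ _, mem_er ha Q⟩
    · rintro ⟨P, B⟩ hp
      have hB := (Finset.mem_sigma.1 hp).2
      have haB : a ∉ B := fun h => ha (sub_of P hB h)
      simp only [res_ext, part_ext, Finset.erase_insert haB]
    · intro Q _; exact ext_res ha Q
    · intros; rfl
  rw [h1, Finset.sum_sigma, Finset.sum_mul]
  refine Finset.sum_congr rfl fun P _ => ?_
  have hle := P.card_parts_le_card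
  rw [Finset.sum_insert P.empty_notMem_parts, mul_add, mul_one]
  have hno : ∀ B, insert a B ∉ P.parts := fun B h => ha (P.subset h (by simp))
  congr 1
  · simp only [Finset.erase_eq_of_notMem P.empty_notMem_parts, W]
    rw [Finset.prod_insert (hno _), Finset.card_insert_of_notMem (hno _),
      Finset.card_insert_of_notMem ha]
    simp
  · rw [← P.sum_card_parts, Nat.cast_sum, Finset.sum_mul, Finset.mul_sum]
    refine Finset.sum_congr rfl fun B hB => ?_
    have haB : a ∉ B := fun h => ha (P.subset hB h)
    have hn' : insert a B ∉ P.parts.erase B := fun h => hno _ (Finset.mem_of_mem_erase h)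
    have hpos := Finset.card_pos.2 (P.nonempty_of_mem_parts hB)
    have hpp : 0 < P.parts.card := Finset.card_pos.2 ⟨B, hB⟩
    simp only [W]
    rw [Finset.prod_insert hn', Finset.card_insert_of_notMem hn', Finset.card_erase_of_mem hB,
      Finset.card_insert_of_notMem ha, Finset.card_insert_of_notMem haB,
      ← Finset.mul_prod_erase _ _ hB, P.sum_card_parts, Nat.add_sub_cancel,
      ← Nat.mul_factorial_pred hpos.ne',
      show s.card + 1 - (P.parts.card - 1 + 1) = s.card - P.parts.card + 1 by omega, pow_succ]
    push_cast
    simp only [map_mul, map_natCast]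
    ring

lemma main (s : Finset α) :
    ∑ P : Finpartition s, W s.card P.parts =
      ∏ i ∈ Finset.range s.card, (1 + (i : ℤ[X]) * X) := by
  induction s using Finset.induction_on with
  | empty =>
    have : ∀ P : Finpartition (∅ : Finset α), P.parts = ∅ := fun P =>
      P.parts_eq_empty_iff.2 rfl
    simp only [this]
    have hc : Fintype.card (Finpartition (∅ : Finset α)) = 1 :=
      Fintype.card_eq_one_iff.2 ⟨Finpartition.empty _, fun P => Finpartition.ext (by
        rw [this, this])⟩
    simp [W, hc]
  | insert a s ha ih =>
    rw [step ha, ih, Finset.card_insert_of_notMem ha, Finset.prod_range_succ]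

end PP

/-- **Poincaré polynomial of the `n`-th component of the Poisson operad**
(from the decomposition (1.113)–(1.114) of the paper): in `ℤ[X]`,

`∑_{P partition of {1,…,n}} (∏_{B block of P} (|B|−1)!) · X^(n − #blocks(P))
  = ∏_{i=1}^{n−1} (1 + i·X)`. -/
theorem sum_partitions_poincare_polynomial
    (n : ℕ) (hn : 1 ≤ n) :
    ∑ P : Finpartition (Finset.univ : Finset (Fin n)),
      C ((∏ B ∈ P.parts, (B.card - 1).factorial : ℕ) : ℤ) * X ^ (n - P.parts.card)
    = ∏ i ∈ Finset.Icc 1 (n - 1), (1 + (i : ℤ[X]) * X) := by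
  have h := PP.main (Finset.univ : Finset (Fin n))
  simp only [PP.W, Finset.card_univ, Fintype.card_fin] at h
  rw [h]
  obtain ⟨m, rfl⟩ : ∃ m, n = m + 1 := ⟨n - 1, by omega⟩
  rw [Nat.add_sub_cancel]
  clear h hn
  induction m with
  | zero => simp
  | succ k ih =>
    rw [Finset.prod_range_succ, ih, Finset.prod_Icc_succ_top (by omega)]
end

section
/- For every m ≥ 1, the alternating sum over all connected simple graphs G on the labelled vertex set {1,…,m} of (−1)^{e(G)}, where e(G) is the number of edges of G, equals (−1)^{m−1} · (m−1)!. (This is the Euler characteristic form of the paper's cited fact (Section 1.1, references [V3, V4]) that the homology of the complex of connected graphs with m labelled vertices is concentrated in dimension m − 2, where it is isomorphic to ℤ^{(m−1)!}.) -/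
open Classical in
theorem aux_toggle {m : ℕ} (a b : Fin m) (hab : a ≠ b) (G : SimpleGraph (Fin m)) :
    (-1 : ℤ) ^ G.edgeSet.ncard +
      (-1 : ℤ) ^ (symmDiff G (SimpleGraph.edge a b)).edgeSet.ncard = 0 := by
  have hE : (SimpleGraph.edge a b).edgeSet = {s(a, b)} :=
    SimpleGraph.edge_edgeSet_of_ne hab
  have h1 : (symmDiff G (SimpleGraph.edge a b)).edgeSet
      = symmDiff G.edgeSet {s(a, b)} := by
    simp only [symmDiff, SimpleGraph.edgeSet_sup, SimpleGraph.edgeSet_sdiff, hE]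
    rfl
  rw [h1]
  by_cases h : s(a, b) ∈ G.edgeSet
  · have h2 : symmDiff G.edgeSet {s(a, b)} = G.edgeSet \ {s(a, b)} := by
      ext e
      simp only [Set.mem_symmDiff, Set.mem_diff, Set.mem_singleton_iff]
      grind
    rw [h2, ← Set.ncard_diff_singleton_add_one h (Set.toFinite _), pow_succ]
    ring
  · have h2 : symmDiff G.edgeSet {s(a, b)} = insert s(a, b) G.edgeSet := by
      ext e
      simp only [Set.mem_symmDiff, Set.mem_insert_iff, Set.mem_singleton_iff]
      grind
    rw [h2, Set.ncard_insert_of_notMem h (Set.toFinite _), pow_succ]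
    ring

open Classical in
theorem aux_inner {m q : ℕ} (f : Fin m → Fin q) :
    ∑ G : SimpleGraph (Fin m),
      (if ∀ a b, G.Adj a b → f a = f b then (-1 : ℤ) ^ G.edgeSet.ncard else 0)
    = if Function.Injective f then 1 else 0 := by
  split_ifs with hf
  · rw [Finset.sum_eq_single (⊥ : SimpleGraph (Fin m))]
    · simp
    · intro G _ hG
      rw [if_neg]
      intro h
      apply hG
      ext a b
      simp only [SimpleGraph.bot_adj, iff_false]
      intro hab
      exact hab.ne (hf (h a b hab))
    · simp
  · simp only [Function.Injective, not_forall] at hf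
    obtain ⟨a, b, hfab, hab⟩ := hf
    rw [← Finset.sum_filter]
    have key : ∀ G : SimpleGraph (Fin m), (∀ c d, G.Adj c d → f c = f d) →
        ∀ c d, (symmDiff G (SimpleGraph.edge a b)).Adj c d → f c = f d := by
      intro G h c d hcd
      simp only [symmDiff, SimpleGraph.sup_adj, SimpleGraph.sdiff_adj,
        SimpleGraph.edge_adj] at hcd
      rcases hcd with ⟨h1, -⟩ | ⟨⟨h1, -⟩, -⟩
      · exact h c d h1
      · rcases h1 with ⟨rfl, rfl⟩ | ⟨rfl, rfl⟩
        · exact hfab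
        · exact hfab.symm
    refine Finset.sum_involution (fun G _ => symmDiff G (SimpleGraph.edge a b)) ?_ ?_ ?_ ?_
    · intro G _
      exact aux_toggle a b hab G
    · intro G _ _ h
      have := aux_toggle a b hab G
      rw [h] at this
      have h3 : (-1 : ℤ) ^ G.edgeSet.ncard ≠ 0 := by positivity
      omega
    · intro G hG
      simp only [Finset.mem_filter, Finset.mem_univ, true_and] at hG ⊢
      exact key G hG
    · intro G _
      exact symmDiff_symmDiff_cancel_right _ _

open Classical in
theorem aux_count {m q : ℕ} (G : SimpleGraph (Fin m)) :
    ((Finset.univ : Finset (Fin m → Fin q)).filter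
      (fun f => ∀ a b, G.Adj a b → f a = f b)).card
    = q ^ Nat.card G.ConnectedComponent := by
  have e : {f : Fin m → Fin q // ∀ a b, G.Adj a b → f a = f b} ≃
      (G.ConnectedComponent → Fin q) :=
    { toFun := fun f => fun c => c.lift f.1 (by
        intro v w p _
        induction p with
        | nil => rfl
        | cons h p ih =>
          rename_i hp
          exact (f.2 _ _ h).trans (ih hp.of_cons))
      invFun := fun g => ⟨fun v => g (G.connectedComponentMk v), fun a b h => by
        exact congrArg g (SimpleGraph.ConnectedComponent.sound h.reachable)⟩
      left_inv := fun f => by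
        ext v
        rfl
      right_inv := fun g => by
        funext c
        induction c using SimpleGraph.ConnectedComponent.ind
        rfl }
  rw [← Fintype.card_subtype, Fintype.card_congr e, Fintype.card_fun, Fintype.card_fin,
    Nat.card_eq_fintype_card]

open Classical in
theorem aux_eval (m q : ℕ) :
    ∑ G : SimpleGraph (Fin m),
      (-1 : ℤ) ^ G.edgeSet.ncard * (q : ℤ) ^ Nat.card G.ConnectedComponent
    = (q.descFactorial m : ℤ) := by
  have h1 : ∀ G : SimpleGraph (Fin m),
      (-1 : ℤ) ^ G.edgeSet.ncard * (q : ℤ) ^ Nat.card G.ConnectedComponent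
      = ∑ f : Fin m → Fin q,
        (if ∀ a b, G.Adj a b → f a = f b then (-1 : ℤ) ^ G.edgeSet.ncard else 0) := by
    intro G
    rw [← Finset.sum_filter, Finset.sum_const, aux_count, nsmul_eq_mul]
    push_cast
    ring
  simp_rw [h1]
  rw [Finset.sum_comm]
  simp_rw [aux_inner]
  rw [Finset.sum_boole, ← Fintype.card_subtype,
    Fintype.card_congr (Equiv.subtypeInjectiveEquivEmbedding (Fin m) (Fin q)),
    Fintype.card_embedding_eq]
  simp

open Classical Polynomial in
theorem aux_poly (m : ℕ) :
    ∑ G : SimpleGraph (Fin m),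
      C ((-1 : ℤ) ^ G.edgeSet.ncard) * (X : ℤ[X]) ^ Nat.card G.ConnectedComponent
    = descPochhammer ℤ m := by
  apply Polynomial.eq_of_infinite_eval_eq
  refine Set.Infinite.mono ?_ (Set.infinite_range_of_injective (Nat.cast_injective (R := ℤ)))
  rintro _ ⟨q, rfl⟩
  simp only [Set.mem_setOf_eq]
  rw [descPochhammer_eval_eq_descFactorial, ← aux_eval, Polynomial.eval_finset_sum]
  simp

open Polynomial in
theorem aux_neg_one (n : ℕ) :
    (descPochhammer ℤ n).eval (-1) = (-1) ^ n * (n.factorial : ℤ) := by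
  induction n with
  | zero => simp
  | succ n ih =>
    rw [descPochhammer_succ_right, Polynomial.eval_mul, ih, Nat.factorial_succ]
    simp
    ring

theorem aux_conn {m : ℕ} (G : SimpleGraph (Fin m)) :
    G.Connected ↔ 1 = Nat.card G.ConnectedComponent := by
  rw [eq_comm, Nat.card_eq_one_iff_unique, SimpleGraph.connected_iff]
  constructor
  · rintro ⟨h, ⟨v⟩⟩
    exact ⟨h.subsingleton_connectedComponent, ⟨G.connectedComponentMk v⟩⟩
  · rintro ⟨h, ⟨c⟩⟩
    refine ⟨fun v w => SimpleGraph.ConnectedComponent.exact (Subsingleton.elim _ _), ?_⟩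
    induction c using SimpleGraph.ConnectedComponent.ind with
    | h v => exact ⟨v⟩

open Classical in
/-- **Euler characteristic of the complex of connected graphs** (Section 1.1 of the
paper, after [V3, V4]): for `m ≥ 1`, the alternating sum over all connected simple
graphs `G` on the labelled vertex set `{1,…,m}` of `(−1)^{e(G)}`, where `e(G)` is the
number of edges of `G`, equals `(−1)^{m−1} · (m−1)!`. -/
theorem sum_connected_graphs_neg_one_pow_edges (m : ℕ) (hm : 1 ≤ m) :
    ∑ G ∈ (Finset.univ : Finset (SimpleGraph (Fin m))).filter (fun G => G.Connected),
      (-1 : ℤ) ^ G.edgeSet.ncard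
    = (-1) ^ (m - 1) * ((m - 1).factorial : ℤ) := by
  obtain ⟨n, rfl⟩ : ∃ n, m = n + 1 := ⟨m - 1, by omega⟩
  have h := congrArg (fun p => Polynomial.coeff p 1) (aux_poly (n + 1))
  simp only [Polynomial.finset_sum_coeff, Polynomial.coeff_C_mul, Polynomial.coeff_X_pow,
    mul_ite, mul_one, mul_zero] at h
  rw [descPochhammer_succ_left, Polynomial.coeff_X_mul, Polynomial.coeff_zero_eq_eval_zero,
    Polynomial.eval_comp] at h
  simp only [Polynomial.eval_sub, Polynomial.eval_X, Polynomial.eval_one, zero_sub,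
    aux_neg_one] at h
  rw [Nat.add_sub_cancel, ← h, Finset.sum_filter]
  simp only [aux_conn]
end
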